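/- In the Melikian algebra M over a field of characteristic 5, [M_{≥1}, M_{≥1}] = M_{≥3} + F·(x₁D̃₁ + x₂D̃₂), where M_{≥d} denotes the sum of the graded pieces of degree at least d. -/

import Mathlib

open scoped BigOperators

namespace Melikian

/-- Index set for monomials in the truncated polynomial algebra
`A(2) = F[x₁,x₂]/(x₁⁵,x₂⁵)`. -/
abbrev Idx : Type := Fin 5 × Fin 5

/-- The truncated polynomial algebra `A(2)`, as functions on monomial exponents. -/
abbrev A (F : Type*) [Field F] : Type _ := Idx → F

variable {F : Type*} [Field F]

/-- The monomial `x^b = x₁^{b₁} x₂^{b₂}`. -/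
def X (b : Idx) : A F := fun a => if a = b then 1 else 0

/-- Truncated multiplication of `A(2)`. -/
def mulA (f g : A F) : A F := fun a =>
  ∑ b : Idx, ∑ c : Idx,
    if b.1.val + c.1.val = a.1.val ∧ b.2.val + c.2.val = a.2.val then f b * g c else 0

/-- Partial derivative `∂/∂x₁` on `A(2)`. -/
def d1 (f : A F) : A F := fun a =>
  if h : a.1.val + 1 < 5 then ((a.1.val + 1 : ℕ) : F) * f (⟨a.1.val + 1, h⟩, a.2) else 0

/-- Partial derivative `∂/∂x₂` on `A(2)`. -/
def d2 (f : A F) : A F := fun a =>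
  if h : a.2.val + 1 < 5 then ((a.2.val + 1 : ℕ) : F) * f (a.1, ⟨a.2.val + 1, h⟩) else 0

/-- The Witt–Jacobson algebra `W(2)` as a free `A(2)`-module with basis `D₁, D₂`:
an element `(f₁, f₂)` stands for `f₁D₁ + f₂D₂`. -/
abbrev W (F : Type*) [Field F] : Type _ := A F × A F

/-- Action of a derivation `D = f₁D₁+f₂D₂ ∈ W(2)` on `A(2)`. -/
def Dw (D : W F) (g : A F) : A F := mulA D.1 (d1 g) + mulA D.2 (d2 g)

/-- Divergence `div(f₁D₁+f₂D₂) = D₁(f₁) + D₂(f₂)`. -/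
def divW (D : W F) : A F := d1 D.1 + d2 D.2

/-- The usual bracket of `W(2)`. -/
def brW (D E : W F) : W F := (Dw D E.1 - Dw E D.1, Dw D E.2 - Dw E D.2)

/-- Multiplication of an element of `W(2)` by a truncated polynomial. -/
def smulA (f : A F) (D : W F) : W F := (mulA f D.1, mulA f D.2)

/-- The Melikian algebra `M = A(2) ⊕ W(2) ⊕ W(2)~` as an `F`-vector space. -/
abbrev Mel (F : Type*) [Field F] : Type _ := A F × W F × W F

/-- Inclusion of `A(2)` into `M`. -/
def ιA (f : A F) : Mel F := (f, 0, 0)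

/-- Inclusion of `W(2)` into `M`. -/
def ιW (D : W F) : Mel F := (0, D, 0)

/-- Inclusion of the second copy `W(2)~` into `M`, `D ↦ D̃`. -/
def ιT (D : W F) : Mel F := (0, 0, D)

/-- The Melikian bracket on `M = A(2) ⊕ W(2) ⊕ W(2)~`, defined by the rules
`[D,Ẽ] = [D,E]~ + 2 div(D) Ẽ`, `[D,f] = D(f) − 2 div(D) f`,
`[f₁D̃₁+f₂D̃₂, g₁D̃₁+g₂D̃₂] = f₁g₂ − f₂g₁`, `[f,Ẽ] = fE`,
`[f,g] = 2(gD₂(f) − fD₂(g))D̃₁ + 2(fD₁(g) − gD₁(f))D̃₂`,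
extended bilinearly and antisymmetrically (with the standard bracket on `W(2)`). -/
def brM (u v : Mel F) : Mel F :=
  ( (Dw u.2.1 v.1 - (2 : F) • mulA (divW u.2.1) v.1)
      - (Dw v.2.1 u.1 - (2 : F) • mulA (divW v.2.1) u.1)
      + (mulA u.2.2.1 v.2.2.2 - mulA u.2.2.2 v.2.2.1)
  , brW u.2.1 v.2.1 + smulA u.1 v.2.2 - smulA v.1 u.2.2
  , (brW u.2.1 v.2.2 + (2 : F) • smulA (divW u.2.1) v.2.2)
      - (brW v.2.1 u.2.2 + (2 : F) • smulA (divW v.2.1) u.2.2)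
      + ((2 : F) • (mulA v.1 (d2 u.1) - mulA u.1 (d2 v.1)),
         (2 : F) • (mulA u.1 (d1 v.1) - mulA v.1 (d1 u.1))) )

/-- `x^b D_i` as an element of `W(2)` (`i = 0` stands for `D₁`, `i = 1` for `D₂`). -/
def wOf (i : Fin 2) (b : Idx) : W F := if i = 0 then (X b, 0) else (0, X b)

/-- The element `x₁D₁ ∈ M`. -/
def x1D1 : Mel F := ιW (X (1, 0), 0)

/-- The element `x₂D₂ ∈ M`. -/
def x2D2 : Mel F := ιW (0, X (0, 1))

/-- The element `1 ∈ A(2) ⊂ M`. -/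
def oneM : Mel F := ιA (X (0, 0))

/-- The element `D_{i+1} ∈ W(2) ⊂ M`. -/
def DD (i : Fin 2) : Mel F := ιW (wOf i (0, 0))

/-- The element `D̃_{i+1} ∈ W(2)~ ⊂ M`. -/
def TT (i : Fin 2) : Mel F := ιT (wOf i (0, 0))

/-- Total degree of a monomial exponent. -/
def degA (b : Idx) : ℤ := (b.1.val : ℤ) + (b.2.val : ℤ)

/-- The degree-`d` piece `M_d` of the `ℤ`-grading of the Melikian algebra:
`deg_M(f) = 3 deg(f) − 2` on `A(2)`, `deg_M(x^bD_i) = 3(|b|−1)` on `W(2)`, and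
`deg_M(x^bD̃_i) = 3(|b|−1)+2` on `W(2)~`. -/
def Md (d : ℤ) : Submodule F (Mel F) :=
  Submodule.span F
    ( {m | ∃ b : Idx, m = ιA (X b) ∧ d = 3 * degA b - 2}
      ∪ {m | ∃ b : Idx, ∃ i : Fin 2, m = ιW (wOf i b) ∧ d = 3 * (degA b - 1)}
      ∪ {m | ∃ b : Idx, ∃ i : Fin 2, m = ιT (wOf i b) ∧ d = 3 * (degA b - 1) + 2} )

/-- The part `M_{≥ d}` of the Melikian algebra. -/
def Mge (d : ℤ) : Submodule F (Mel F) := ⨆ e : ℤ, ⨆ _ : d ≤ e, (Md e : Submodule F (Mel F))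

/-- The squaring `Sq(γ)(x,y) = Σ_{k=1}^{4} [γ^k(x), γ^{5−k}(y)] / (k!(5−k)!)`
of an operator `γ` on the Melikian algebra (characteristic 5). -/
def melSq (γ : Mel F → Mel F) (x y : Mel F) : Mel F :=
  ∑ k ∈ Finset.Icc 1 4,
    ((Nat.factorial k * Nat.factorial (5 - k) : ℕ) : F)⁻¹ • brM (γ^[k] x) (γ^[5 - k] y)

/-- The Chevalley–Eilenberg coboundary of a linear 1-cochain of `M` with values in the
adjoint representation. -/
def cob (g : Mel F →ₗ[F] Mel F) (x y : Mel F) : Mel F :=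
  brM x (g y) - brM y (g x) - g (brM x y)

/-!
The bracket respects the grading, and `M₁` is spanned by `x₁` and `x₂`. Hence `[M_{≥1}, M_{≥1}]` is
contained in the sum of `M_{≥3}` and the line spanned by `[x₁, x₂]`, a multiple of `x₁D̃₁ + x₂D̃₂`.

Conversely, a monomial of degree at least `2` is a product `fg` with `f` and `g` of degree at least
`1`, so `[fD̃₁, gD̃₂] = fg` and `[f, gD̃ᵢ] = fg Dᵢ` give the parts of `M_{≥3}` in `A(2)` and `W(2)`.
For `W(2)~`, use `[x^a D₁, x^c D̃₁] = (a₁ + c₁) x^{a + c - ε₁} D̃₁` to reach `x₁^m x₂^n D̃₁` with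
`m ≠ 4`, and `[x₁² x₂^i, x₁² x₂^k] = 2(i - k) x₁⁴ x₂^{i + k - 1} D̃₁` to reach `m = 4`. The
automorphism exchanging `x₁` and `x₂` carries these to the elements `x^b D̃₂`.
-/

/-! ### Arithmetic in `A(2)` -/

/-- The monomial `x₁^m x₂^n` for arbitrary natural exponents. It is zero unless `m, n < 5`, so that
the formulas for products and derivatives of monomials hold without case distinctions. -/
def mon (m n : ℕ) : A F := fun a => if a.1.val = m ∧ a.2.val = n then 1 else 0

/-- The exchange of variables `f(x₁, x₂) ↦ f(x₂, x₁)` on `A(2)`. -/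
def swapA : A F →ₗ[F] A F := LinearMap.funLeft F F Prod.swap

theorem X_eq_mon (b : Idx) : (X b : A F) = mon b.1 b.2 := by
  funext a
  simp only [X, mon, Prod.ext_iff, Fin.ext_iff]

theorem swapA_mon (m n : ℕ) : swapA (mon m n : A F) = mon n m := by
  funext a
  exact if_congr and_comm rfl rfl

theorem mulA_swapA (f g : A F) : mulA (swapA f) (swapA g) = swapA (mulA f g) := by
  funext a
  change mulA (swapA f) (swapA g) a = mulA f g a.swap
  unfold mulA
  exact Fintype.sum_equiv (Equiv.prodComm _ _) _ _ fun b =>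
    Fintype.sum_equiv (Equiv.prodComm _ _) _ _ fun c => if_congr and_comm rfl rfl

theorem d1_swapA (f : A F) : d1 (swapA f) = swapA (d2 f) := rfl

theorem d2_swapA (f : A F) : d2 (swapA f) = swapA (d1 f) := rfl

theorem d2_eq_swapA_d1_swapA (f : A F) : d2 f = swapA (d1 (swapA f)) := rfl

theorem mulA_comm (f g : A F) : mulA f g = mulA g f := by
  funext a
  rw [mulA, mulA, Finset.sum_comm]
  simp only [add_comm, mul_comm]

theorem mulA_add (f g h : A F) : mulA f (g + h) = mulA f g + mulA f h := by
  funext a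
  simp only [mulA, Pi.add_apply, mul_add, ← Finset.sum_add_distrib, ite_add_zero]

theorem add_mulA (f g h : A F) : mulA (f + g) h = mulA f h + mulA g h := by
  rw [mulA_comm, mulA_add, mulA_comm h, mulA_comm h]

theorem mulA_smul (c : F) (f g : A F) : mulA f (c • g) = c • mulA f g := by
  funext a
  simp only [mulA, Pi.smul_apply, smul_eq_mul, Finset.mul_sum, mul_ite, mul_zero, mul_left_comm]

theorem smul_mulA (c : F) (f g : A F) : mulA (c • f) g = c • mulA f g := by
  rw [mulA_comm, mulA_smul, mulA_comm]

@[simp] theorem mulA_zero (f : A F) : mulA f 0 = 0 := by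
  simpa only [zero_smul] using mulA_smul 0 f 0

@[simp] theorem zero_mulA (f : A F) : mulA 0 f = 0 := by
  rw [mulA_comm, mulA_zero]

theorem mulA_neg (f g : A F) : mulA f (-g) = -mulA f g := by
  simpa only [neg_one_smul] using mulA_smul (-1) f g

theorem neg_mulA (f g : A F) : mulA (-f) g = -mulA f g := by
  rw [mulA_comm, mulA_neg, mulA_comm]

theorem d1_add (f g : A F) : d1 (f + g) = d1 f + d1 g := by
  funext a
  by_cases h : a.1.val + 1 < 5 <;> simp [d1, h, mul_add]

theorem d1_smul (c : F) (f : A F) : d1 (c • f) = c • d1 f := by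
  funext a
  by_cases h : a.1.val + 1 < 5 <;> simp [d1, h, mul_left_comm]

@[simp] theorem d1_zero : d1 (0 : A F) = 0 := by
  simpa only [zero_smul] using d1_smul 0 (0 : A F)

theorem d1_neg (f : A F) : d1 (-f) = -d1 f := by
  simpa only [neg_one_smul] using d1_smul (-1) f

theorem d2_add (f g : A F) : d2 (f + g) = d2 f + d2 g := by
  simp only [d2_eq_swapA_d1_swapA, map_add, d1_add]

theorem d2_smul (c : F) (f : A F) : d2 (c • f) = c • d2 f := by
  simp only [d2_eq_swapA_d1_swapA, map_smul, d1_smul]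

@[simp] theorem d2_zero : d2 (0 : A F) = 0 := by
  simp only [d2_eq_swapA_d1_swapA, map_zero, d1_zero]

theorem d2_neg (f : A F) : d2 (-f) = -d2 f := by
  simp only [d2_eq_swapA_d1_swapA, map_neg, d1_neg]

theorem mulA_mon (m n p q : ℕ) : mulA (mon m n) (mon p q) = (mon (m + p) (n + q) : A F) := by
  funext a
  by_cases ha : a.1.val = m + p ∧ a.2.val = n + q
  · let b : Idx := (⟨m, by omega⟩, ⟨n, by omega⟩)
    let c : Idx := (⟨p, by omega⟩, ⟨q, by omega⟩)
    have hb : (mon m n : A F) = X b := (X_eq_mon b).symm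
    have hc : (mon p q : A F) = X c := (X_eq_mon c).symm
    rw [mulA, Finset.sum_eq_single b, Finset.sum_eq_single c]
    · simp [mon, ha, b, c]
    all_goals simp +contextual [hb, hc, X]
  · have hmon : (mon (m + p) (n + q) : A F) a = 0 := if_neg ha
    rw [hmon, mulA]
    refine Finset.sum_eq_zero fun b _ => Finset.sum_eq_zero fun c _ => ?_
    simp only [mon, ite_mul, one_mul, zero_mul]
    split_ifs <;> first | rfl | omega

/-- Characteristic 5 enters for `m = 5`, where the left-hand side vanishes by truncation. -/
theorem d1_mon [CharP F 5] (m n : ℕ) : d1 (mon m n : A F) = (m : F) • mon (m - 1) n := by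
  funext a
  by_cases ha : a.1.val + 1 = m
  · subst ha
    by_cases h : a.1.val + 1 < 5
    · simp [d1, mon, h]
    · obtain h' : a.1.val + 1 = 5 := by omega
      simp [d1, h', -Nat.cast_ofNat]
  · rcases Nat.eq_zero_or_pos m with rfl | hm
    · simp [d1, mon]
    · have ha' : a.1.val ≠ m - 1 := by omega
      simp [d1, mon, ha, ha']

theorem mulA_mon_d1_mon [CharP F 5] (m n p q : ℕ) :
    mulA (mon m n) (d1 (mon p q)) = (p : F) • (mon (m + p - 1) (n + q) : A F) := by
  rw [d1_mon, mulA_smul, mulA_mon]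
  rcases p with _ | p
  · simp only [Nat.cast_zero, zero_smul]
  · rfl

theorem mulA_mon_d2_mon [CharP F 5] (m n p q : ℕ) :
    mulA (mon m n) (d2 (mon p q)) = (q : F) • (mon (m + p) (n + q - 1) : A F) := by
  rw [d2_eq_swapA_d1_swapA, ← swapA_mon n m, mulA_swapA, swapA_mon, mulA_mon_d1_mon, map_smul,
    swapA_mon]

/-! ### Weights -/

/-- The truncated polynomials all of whose monomials `x^b` satisfy `r ≤ 3|b|`. The factor `3` is
the weight of `x₁` and `x₂` in the grading of the Melikian algebra. -/
def weightGe (r : ℤ) : Submodule F (A F) := Submodule.pi {b | 3 * degA b < r} fun _ => ⊥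

theorem mem_weightGe_iff {r : ℤ} {f : A F} : f ∈ weightGe r ↔ ∀ b, 3 * degA b < r → f b = 0 := by
  simp only [weightGe, Submodule.mem_pi, Set.mem_ofPred_eq, Submodule.mem_bot]

theorem mon_mem_weightGe {r : ℤ} {m n : ℕ} (h : r ≤ 3 * (m + n)) :
    (mon m n : A F) ∈ weightGe r := by
  refine mem_weightGe_iff.2 fun b hb => if_neg ?_
  rintro ⟨rfl, rfl⟩
  exact absurd h (not_le.2 hb)

theorem X_mem_weightGe {r : ℤ} {b : Idx} (h : r ≤ 3 * degA b) : (X b : A F) ∈ weightGe r :=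
  X_eq_mon (F := F) b ▸ mon_mem_weightGe h

/-- The part of weight at least `r` of `W(2)`, where `D₁` and `D₂` are given weight `0`. -/
abbrev weightGeW (r : ℤ) : Submodule F (W F) := (weightGe r).prod (weightGe r)

theorem weightGe_le {r : ℤ} {N : Submodule F (A F)} (h : ∀ b, r ≤ 3 * degA b → X b ∈ N) :
    weightGe r ≤ N := by
  intro f hf
  have hsum : f = ∑ b, f b • X b := by
    funext a
    simp [X]
  rw [hsum]
  refine Submodule.sum_mem _ fun b _ => ?_
  rcases lt_or_ge (3 * degA b) r with hb | hb
  · rw [mem_weightGe_iff.1 hf b hb, zero_smul]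
    exact N.zero_mem
  · exact N.smul_mem _ (h b hb)

theorem weightGe_anti {r s : ℤ} (h : r ≤ s) : (weightGe s : Submodule F (A F)) ≤ weightGe r :=
  weightGe_le fun _ hb => X_mem_weightGe (h.trans hb)

theorem swapA_mem_weightGe {r : ℤ} {f : A F} (hf : f ∈ weightGe r) : swapA f ∈ weightGe r := by
  refine mem_weightGe_iff.2 fun b hb => mem_weightGe_iff.1 hf b.swap ?_
  simp only [degA, Prod.fst_swap, Prod.snd_swap] at hb ⊢
  omega

theorem mulA_mem_weightGe {r s t : ℤ} {f g : A F} (hf : f ∈ weightGe r) (hg : g ∈ weightGe s)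
    (h : t ≤ r + s) : mulA f g ∈ weightGe t := by
  refine mem_weightGe_iff.2 fun a ha =>
    Finset.sum_eq_zero fun b _ => Finset.sum_eq_zero fun c _ => ?_
  split_ifs with habc
  · have hdeg : degA b + degA c = degA a := by unfold degA; omega
    rcases lt_or_ge (3 * degA b) r with hb | hb
    · rw [mem_weightGe_iff.1 hf b hb, zero_mul]
    · rw [mem_weightGe_iff.1 hg c (by omega), mul_zero]
  · rfl

theorem d1_mem_weightGe {r : ℤ} {f : A F} (hf : f ∈ weightGe r) : d1 f ∈ weightGe (r - 3) := by
  refine mem_weightGe_iff.2 fun a ha => ?_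
  unfold d1
  split_ifs with h
  · rw [mem_weightGe_iff.1 hf _ (by simp only [degA] at ha ⊢; omega), mul_zero]
  · rfl

theorem d2_mem_weightGe {r : ℤ} {f : A F} (hf : f ∈ weightGe r) : d2 f ∈ weightGe (r - 3) :=
  swapA_mem_weightGe (d1_mem_weightGe (swapA_mem_weightGe hf))

theorem linear_mem_weightGe (a b : F) : a • (mon 1 0 : A F) + b • mon 0 1 ∈ weightGe 3 :=
  add_mem (Submodule.smul_mem _ _ (mon_mem_weightGe (by simp)))
    (Submodule.smul_mem _ _ (mon_mem_weightGe (by simp)))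

theorem exists_sub_linear_mem_weightGe {f : A F} (hf : f ∈ weightGe 3) :
    ∃ a b : F, f - (a • mon 1 0 + b • mon 0 1) ∈ weightGe 4 := by
  refine ⟨f (1, 0), f (0, 1), mem_weightGe_iff.2 fun c hc => ?_⟩
  obtain rfl | rfl | rfl : c = (0, 0) ∨ c = (1, 0) ∨ c = (0, 1) := by
    have hdeg : c.1.val + c.2.val ≤ 1 := by unfold degA at hc; omega
    revert c
    decide
  · simp [mon, mem_weightGe_iff.1 hf (0, 0) (by simp [degA])]
  all_goals simp [mon]

theorem exists_mulA_eq_X {b : Idx} (hb : 2 ≤ degA b) :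
    ∃ f ∈ (weightGe 3 : Submodule F (A F)), ∃ g ∈ (weightGe 3 : Submodule F (A F)),
      mulA f g = X b := by
  rw [X_eq_mon]
  obtain ⟨⟨m, _⟩, ⟨n, _⟩⟩ := b
  simp only [degA] at hb ⊢
  rcases m with _ | m
  · refine ⟨mon 0 1, mon_mem_weightGe (by simp), mon 0 (n - 1),
      mon_mem_weightGe (by omega), ?_⟩
    rw [mulA_mon, add_tsub_cancel_of_le (by omega)]
  · refine ⟨mon 1 0, mon_mem_weightGe (by simp), mon m n, mon_mem_weightGe (by omega), ?_⟩
    rw [mulA_mon, zero_add, add_comm 1 m]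

theorem mk_zero_mem_weightGeW {r : ℤ} {f : A F} (hf : f ∈ weightGe r) : (f, 0) ∈ weightGeW r :=
  ⟨hf, zero_mem _⟩

theorem zero_mk_mem_weightGeW {r : ℤ} {f : A F} (hf : f ∈ weightGe r) : (0, f) ∈ weightGeW r :=
  ⟨zero_mem _, hf⟩

theorem wOf_mem_weightGeW {r : ℤ} {b : Idx} (i : Fin 2) (h : r ≤ 3 * degA b) :
    (wOf i b : W F) ∈ weightGeW r := by
  fin_cases i
  · exact mk_zero_mem_weightGeW (X_mem_weightGe h)
  · exact zero_mk_mem_weightGeW (X_mem_weightGe h)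

theorem Dw_mem_weightGe {r s t : ℤ} {D : W F} {f : A F} (hD : D ∈ weightGeW r)
    (hf : f ∈ weightGe s) (h : t ≤ r + s - 3) : Dw D f ∈ weightGe t :=
  add_mem (mulA_mem_weightGe hD.1 (d1_mem_weightGe hf) (by omega))
    (mulA_mem_weightGe hD.2 (d2_mem_weightGe hf) (by omega))

theorem divW_mem_weightGe {r : ℤ} {D : W F} (hD : D ∈ weightGeW r) : divW D ∈ weightGe (r - 3) :=
  add_mem (d1_mem_weightGe hD.1) (d2_mem_weightGe hD.2)

theorem brW_mem_weightGeW {r s t : ℤ} {D E : W F} (hD : D ∈ weightGeW r) (hE : E ∈ weightGeW s)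
    (h : t ≤ r + s - 3) : brW D E ∈ weightGeW t :=
  ⟨sub_mem (Dw_mem_weightGe hD hE.1 h) (Dw_mem_weightGe hE hD.1 (by omega)),
    sub_mem (Dw_mem_weightGe hD hE.2 h) (Dw_mem_weightGe hE hD.2 (by omega))⟩

theorem smulA_mem_weightGeW {r s t : ℤ} {f : A F} {D : W F} (hf : f ∈ weightGe r)
    (hD : D ∈ weightGeW s) (h : t ≤ r + s) : smulA f D ∈ weightGeW t :=
  ⟨mulA_mem_weightGe hf hD.1 h, mulA_mem_weightGe hf hD.2 h⟩

/-! ### The filtration -/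

theorem Md_le_Mge {d e : ℤ} (h : d ≤ e) : (Md e : Submodule F (Mel F)) ≤ Mge d :=
  le_iSup₂_of_le e h le_rfl

theorem ιA_X_mem_Md (b : Idx) : ιA (X b) ∈ (Md (3 * degA b - 2) : Submodule F (Mel F)) :=
  Submodule.subset_span (Or.inl (Or.inl ⟨b, rfl, rfl⟩))

theorem ιW_wOf_mem_Md (b : Idx) (i : Fin 2) :
    ιW (wOf i b) ∈ (Md (3 * (degA b - 1)) : Submodule F (Mel F)) :=
  Submodule.subset_span (Or.inl (Or.inr ⟨b, i, rfl, rfl⟩))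

theorem ιT_wOf_mem_Md (b : Idx) (i : Fin 2) :
    ιT (wOf i b) ∈ (Md (3 * (degA b - 1) + 2) : Submodule F (Mel F)) :=
  Submodule.subset_span (Or.inr ⟨b, i, rfl, rfl⟩)

theorem Mge_le {d : ℤ} {N : Submodule F (Mel F)}
    (hA : ∀ b, d ≤ 3 * degA b - 2 → ιA (X b) ∈ N)
    (hW : ∀ b i, d ≤ 3 * (degA b - 1) → ιW (wOf i b) ∈ N)
    (hT : ∀ b i, d ≤ 3 * (degA b - 1) + 2 → ιT (wOf i b) ∈ N) : Mge d ≤ N := by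
  refine iSup₂_le fun e he => Submodule.span_le.2 ?_
  rintro m ((⟨b, rfl, rfl⟩ | ⟨b, i, rfl, rfl⟩) | ⟨b, i, rfl, rfl⟩)
  · exact hA b he
  · exact hW b i he
  · exact hT b i he

theorem Mge_eq_prod (d : ℤ) : (Mge d : Submodule F (Mel F)) =
    (weightGe (d + 2)).prod ((weightGeW (d + 3)).prod (weightGeW (d + 1))) := by
  apply le_antisymm
  · refine Mge_le (fun b hb => ?_) (fun b i hb => ?_) (fun b i hb => ?_)
    · exact ⟨X_mem_weightGe (by omega), zero_mem _, zero_mem _⟩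
    · exact ⟨zero_mem _, wOf_mem_weightGeW i (by omega), zero_mem _⟩
    · exact ⟨zero_mem _, zero_mem _, wOf_mem_weightGeW i (by omega)⟩
  · simp only [Submodule.prod_le_iff, Submodule.map_le_iff_le_comap]
    refine ⟨weightGe_le fun b hb => ?_, ⟨weightGe_le fun b hb => ?_, weightGe_le fun b hb => ?_⟩,
      weightGe_le fun b hb => ?_, weightGe_le fun b hb => ?_⟩
    · exact Md_le_Mge (by omega) (ιA_X_mem_Md b)
    · exact Md_le_Mge (by omega) (ιW_wOf_mem_Md b 0)
    · exact Md_le_Mge (by omega) (ιW_wOf_mem_Md b 1)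
    · exact Md_le_Mge (by omega) (ιT_wOf_mem_Md b 0)
    · exact Md_le_Mge (by omega) (ιT_wOf_mem_Md b 1)

theorem mem_Mge_iff {d : ℤ} {u : Mel F} : u ∈ (Mge d : Submodule F (Mel F)) ↔
    u.1 ∈ weightGe (d + 2) ∧ u.2.1 ∈ weightGeW (d + 3) ∧ u.2.2 ∈ weightGeW (d + 1) := by
  rw [Mge_eq_prod, Submodule.mem_prod, Submodule.mem_prod]

theorem ιA_mem_Mge {d : ℤ} {f : A F} (hf : f ∈ weightGe (d + 2)) :
    ιA f ∈ (Mge d : Submodule F (Mel F)) :=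
  mem_Mge_iff.2 ⟨hf, zero_mem _, zero_mem _⟩

theorem ιW_mem_Mge {d : ℤ} {D : W F} (hD : D ∈ weightGeW (d + 3)) :
    ιW D ∈ (Mge d : Submodule F (Mel F)) :=
  mem_Mge_iff.2 ⟨zero_mem _, hD, zero_mem _⟩

theorem ιT_mem_Mge {d : ℤ} {D : W F} (hD : D ∈ weightGeW (d + 1)) :
    ιT D ∈ (Mge d : Submodule F (Mel F)) :=
  mem_Mge_iff.2 ⟨zero_mem _, zero_mem _, hD⟩

theorem exists_eq_linear_add_of_mem_Mge_one {u : Mel F}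
    (hu : u ∈ (Mge 1 : Submodule F (Mel F))) :
    ∃ a b : F, ∃ v ∈ (Mge 2 : Submodule F (Mel F)), u = ιA (a • mon 1 0 + b • mon 0 1) + v := by
  obtain ⟨hA, ⟨hW₁, hW₂⟩, hT₁, hT₂⟩ := mem_Mge_iff.1 hu
  obtain ⟨a, b, hab⟩ := exists_sub_linear_mem_weightGe hA
  have hW : (weightGe (1 + 3) : Submodule F (A F)) ≤ weightGe (2 + 3) :=
    weightGe_le fun _ h => X_mem_weightGe (by omega)
  have hT : (weightGe (1 + 1) : Submodule F (A F)) ≤ weightGe (2 + 1) :=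
    weightGe_le fun _ h => X_mem_weightGe (by omega)
  refine ⟨a, b, (u.1 - (a • mon 1 0 + b • mon 0 1), u.2),
    mem_Mge_iff.2 ⟨hab, ⟨hW hW₁, hW hW₂⟩, hT hT₁, hT hT₂⟩, Prod.ext ?_ ?_⟩
  · exact (add_sub_cancel _ _).symm
  · exact (zero_add _).symm

/-! ### The bracket -/

theorem brM_antisymm (u v : Mel F) : brM u v = -brM v u := by
  simp only [brM, brW, Dw, smulA, mulA_comm v.2.2.1, mulA_comm v.2.2.2, Prod.mk_add_mk,
    Prod.mk_sub_mk, Prod.smul_mk, Prod.neg_mk]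
  refine Prod.ext ?_ (Prod.ext (Prod.ext ?_ ?_) (Prod.ext ?_ ?_)) <;> module

theorem brM_add_right (u v w : Mel F) : brM u (v + w) = brM u v + brM u w := by
  simp only [brM, brW, Dw, divW, smulA, mulA_add, add_mulA, d1_add, d2_add, Prod.fst_add,
    Prod.snd_add, Prod.mk_add_mk, Prod.mk_sub_mk, Prod.smul_mk]
  refine Prod.ext ?_ (Prod.ext (Prod.ext ?_ ?_) (Prod.ext ?_ ?_)) <;> module

theorem brM_add_left (u v w : Mel F) : brM (u + v) w = brM u w + brM v w := by
  rw [brM_antisymm, brM_add_right, neg_add, ← brM_antisymm, ← brM_antisymm]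

theorem brM_mem_Mge {d e : ℤ} {u v : Mel F} (hu : u ∈ (Mge d : Submodule F (Mel F)))
    (hv : v ∈ (Mge e : Submodule F (Mel F))) :
    brM u v ∈ (Mge (d + e) : Submodule F (Mel F)) := by
  obtain ⟨uA, uW, uT⟩ := mem_Mge_iff.1 hu
  obtain ⟨vA, vW, vT⟩ := mem_Mge_iff.1 hv
  refine mem_Mge_iff.2 ⟨?_, ?_, ?_⟩
  · refine add_mem (sub_mem (sub_mem ?_ ?_) (sub_mem ?_ ?_)) (sub_mem ?_ ?_)
    · exact Dw_mem_weightGe uW vA (by omega)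
    · exact Submodule.smul_mem _ _ (mulA_mem_weightGe (divW_mem_weightGe uW) vA (by omega))
    · exact Dw_mem_weightGe vW uA (by omega)
    · exact Submodule.smul_mem _ _ (mulA_mem_weightGe (divW_mem_weightGe vW) uA (by omega))
    · exact mulA_mem_weightGe uT.1 vT.2 (by omega)
    · exact mulA_mem_weightGe uT.2 vT.1 (by omega)
  · refine sub_mem (add_mem ?_ ?_) ?_
    · exact brW_mem_weightGeW uW vW (by omega)
    · exact smulA_mem_weightGeW uA vT (by omega)
    · exact smulA_mem_weightGeW vA uT (by omega)
  · refine add_mem (sub_mem (add_mem ?_ ?_) (add_mem ?_ ?_)) ⟨?_, ?_⟩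
    · exact brW_mem_weightGeW uW vT (by omega)
    · exact Submodule.smul_mem _ _ (smulA_mem_weightGeW (divW_mem_weightGe uW) vT (by omega))
    · exact brW_mem_weightGeW vW uT (by omega)
    · exact Submodule.smul_mem _ _ (smulA_mem_weightGeW (divW_mem_weightGe vW) uT (by omega))
    · exact Submodule.smul_mem _ _ (sub_mem (mulA_mem_weightGe vA (d2_mem_weightGe uA) (by omega))
        (mulA_mem_weightGe uA (d2_mem_weightGe vA) (by omega)))
    · exact Submodule.smul_mem _ _ (sub_mem (mulA_mem_weightGe uA (d1_mem_weightGe vA) (by omega))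
        (mulA_mem_weightGe vA (d1_mem_weightGe uA) (by omega)))

theorem brM_ιA_ιT (f : A F) (E : W F) : brM (ιA f) (ιT E) = ιW (smulA f E) := by
  ext a <;> simp [brM, ιA, ιT, ιW, brW, Dw, divW, smulA]

theorem brM_ιT_ιT (D E : W F) :
    brM (ιT D) (ιT E) = ιA (mulA D.1 E.2 - mulA D.2 E.1) := by
  ext a <;> simp [brM, ιA, ιT, brW, Dw, divW, smulA]

theorem brM_ιW_ιT (D E : W F) :
    brM (ιW D) (ιT E) = ιT (brW D E + (2 : F) • smulA (divW D) E) := by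
  ext a <;> simp [brM, ιT, ιW, brW, Dw, divW, smulA]

theorem brM_ιA_ιA (f g : A F) :
    brM (ιA f) (ιA g) = ιT ((2 : F) • (mulA g (d2 f) - mulA f (d2 g)),
      (2 : F) • (mulA f (d1 g) - mulA g (d1 f))) := by
  ext a <;> simp [brM, ιA, ιT, brW, Dw, divW, smulA]

theorem ιT_smul (c : F) (D : W F) : ιT (c • D) = c • (ιT D : Mel F) := by
  simp only [ιT, Prod.smul_mk, smul_zero]

theorem brM_ιW_mon_ιT_mon [CharP F 5] (m n p q : ℕ) :
    brM (ιW (mon m n, 0)) (ιT (mon p q, 0)) =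
      ((m + p : ℕ) : F) • (ιT (mon (m + p - 1) (n + q), 0) : Mel F) := by
  rw [brM_ιW_ιT, ← ιT_smul]
  congr 1
  simp only [brW, Dw, divW, smulA, mulA_comm _ (mon p q), mulA_mon_d1_mon, add_comm p, add_comm q,
    d1_zero, d2_zero, mulA_zero, zero_mulA, smul_zero, add_zero, sub_self, Prod.smul_mk,
    Prod.mk_add_mk, Prod.mk.injEq, and_true]
  module

theorem brM_ιA_mon_ιA_mon [CharP F 5] (m n j : ℕ) :
    brM (ιA (mon m (n + j))) (ιA (mon m n)) =
      ((2 * j : ℕ) : F) • (ιT (mon (m + m) (n + n + j - 1), 0) : Mel F) := by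
  rw [brM_ιA_ιA, ← ιT_smul]
  congr 1
  simp only [mulA_mon_d1_mon, mulA_mon_d2_mon, add_comm (n + j) n, ← add_assoc, sub_self,
    smul_zero, Prod.smul_mk, Prod.mk.injEq, and_true, Nat.cast_add, Nat.cast_mul, Nat.cast_ofNat]
  module

theorem brM_ιA_linear_ιA_linear [CharP F 5] (a b c d : F) :
    brM (ιA (a • mon 1 0 + b • mon 0 1)) (ιA (c • mon 1 0 + d • mon 0 1)) =
      (2 * (b * c - a * d)) • (ιT (X (1, 0), X (0, 1)) : Mel F) := by
  rw [brM_ιA_ιA, ← ιT_smul, X_eq_mon, X_eq_mon]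
  congr 1
  simp only [mulA_add, add_mulA, mulA_smul, smul_mulA, d1_add, d2_add, d1_smul, d2_smul,
    mulA_mon_d1_mon, mulA_mon_d2_mon, Nat.cast_zero, Nat.cast_one, zero_smul, one_smul, smul_zero,
    zero_add, add_zero, add_tsub_cancel_right, tsub_self, Fin.coe_ofNat_eq_mod, Nat.zero_mod,
    Nat.one_mod, Prod.smul_mk]
  exact Prod.ext (by module) (by module)

/-! ### The swap automorphism -/

/-- The automorphism of the Melikian algebra induced by the exchange of `x₁` and `x₂`. The signs on
`A(2)` and `W(2)~` compensate for the antisymmetry of `[f₁D̃₁ + f₂D̃₂, g₁D̃₁ + g₂D̃₂]`. -/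
def swapM : Mel F →ₗ[F] Mel F where
  toFun u := (-swapA u.1, (swapA u.2.1.2, swapA u.2.1.1), (-swapA u.2.2.2, -swapA u.2.2.1))
  map_add' u v := by simp only [Prod.fst_add, Prod.snd_add, map_add, neg_add, Prod.mk_add_mk]
  map_smul' c u := by
    simp only [Prod.smul_fst, Prod.smul_snd, map_smul, smul_neg, Prod.smul_mk, RingHom.id_apply]

theorem swapM_apply (u : Mel F) : swapM u =
    (-swapA u.1, (swapA u.2.1.2, swapA u.2.1.1), (-swapA u.2.2.2, -swapA u.2.2.1)) :=
  rfl

theorem swapM_mem_Mge {d : ℤ} {u : Mel F} (hu : u ∈ (Mge d : Submodule F (Mel F))) :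
    swapM u ∈ (Mge d : Submodule F (Mel F)) := by
  obtain ⟨hA, ⟨hW₁, hW₂⟩, hT₁, hT₂⟩ := mem_Mge_iff.1 hu
  exact mem_Mge_iff.2 ⟨neg_mem (swapA_mem_weightGe hA),
    ⟨swapA_mem_weightGe hW₂, swapA_mem_weightGe hW₁⟩,
    neg_mem (swapA_mem_weightGe hT₂), neg_mem (swapA_mem_weightGe hT₁)⟩

theorem swapM_brM (u v : Mel F) : swapM (brM u v) = brM (swapM u) (swapM v) := by
  simp only [swapM_apply, brM, brW, Dw, divW, smulA, mulA_neg, neg_mulA, d1_neg, d2_neg, d1_swapA,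
    d2_swapA, add_mulA, mulA_swapA, map_add, map_sub, map_smul, Prod.mk_add_mk,
    Prod.mk_sub_mk, Prod.smul_mk]
  refine Prod.ext ?_ (Prod.ext (Prod.ext ?_ ?_) (Prod.ext ?_ ?_)) <;> module

/-! ### Commutators -/

/-- The commutator `[N, N]`, i.e. the span of all brackets of elements of `N`. -/
def commutator (N : Submodule F (Mel F)) : Submodule F (Mel F) :=
  Submodule.span F {m | ∃ x ∈ N, ∃ y ∈ N, m = brM x y}

theorem brM_mem_commutator {N : Submodule F (Mel F)} {x y : Mel F} (hx : x ∈ N) (hy : y ∈ N) :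
    brM x y ∈ commutator N :=
  Submodule.subset_span ⟨x, hx, y, hy, rfl⟩

theorem swapM_mem_commutator {N : Submodule F (Mel F)} (hN : ∀ x ∈ N, swapM x ∈ N) {u : Mel F}
    (hu : u ∈ commutator N) : swapM u ∈ commutator N := by
  suffices h : commutator N ≤ (commutator N).comap swapM from h hu
  refine Submodule.span_le.2 ?_
  rintro _ ⟨x, hx, y, hy, rfl⟩
  rw [SetLike.mem_coe, Submodule.mem_comap, swapM_brM]
  exact brM_mem_commutator (hN x hx) (hN y hy)

theorem mem_of_natCast_smul_mem {V : Type*} [AddCommGroup V] [Module F V] (p : ℕ) [CharP F p]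
    {N : Submodule F V} {n : ℕ} {v : V} (hn : ¬ p ∣ n) (h : (n : F) • v ∈ N) : v ∈ N :=
  (Submodule.smul_mem_iff N (mt (CharP.cast_eq_zero_iff F p n).1 hn)).1 h

theorem ιA_X_mem_commutator {b : Idx} (hb : 2 ≤ degA b) :
    ιA (X b) ∈ commutator (Mge 1 : Submodule F (Mel F)) := by
  obtain ⟨f, hf, g, hg, hfg⟩ := exists_mulA_eq_X (F := F) hb
  have hbr : brM (ιT (f, 0)) (ιT (0, g)) = (ιA (X b) : Mel F) := by
    simp only [brM_ιT_ιT, hfg, mulA_zero, sub_zero]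
  rw [← hbr]
  exact brM_mem_commutator
    (ιT_mem_Mge (mk_zero_mem_weightGeW (weightGe_anti (by norm_num) hf)))
    (ιT_mem_Mge (zero_mk_mem_weightGeW (weightGe_anti (by norm_num) hg)))

theorem ιW_wOf_mem_commutator {b : Idx} (i : Fin 2) (hb : 2 ≤ degA b) :
    ιW (wOf i b) ∈ commutator (Mge 1 : Submodule F (Mel F)) := by
  obtain ⟨f, hf, g, hg, hfg⟩ := exists_mulA_eq_X (F := F) hb
  have hg' : g ∈ weightGe (1 + 1) := weightGe_anti (by norm_num) hg
  have hbr (E : W F) (hE : E ∈ weightGeW (1 + 1)) : ιW (smulA f E) ∈ commutator (Mge 1) :=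
    brM_ιA_ιT f E ▸ brM_mem_commutator (ιA_mem_Mge hf) (ιT_mem_Mge hE)
  fin_cases i
  · simpa [wOf, smulA, hfg] using hbr (g, 0) (mk_zero_mem_weightGeW hg')
  · simpa [wOf, smulA, hfg] using hbr (0, g) (zero_mk_mem_weightGeW hg')

theorem ιT_mon_mem_commutator_of_lt_four [CharP F 5] {m n : ℕ} (hm : m < 4) (h : 2 ≤ m + n) :
    ιT (mon m n, 0) ∈ commutator (Mge 1 : Submodule F (Mel F)) := by
  obtain ⟨a, b, c, d, hm', hn', hab, hcd⟩ : ∃ a b c d : ℕ,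
      a + c = m + 1 ∧ b + d = n ∧ 2 ≤ a + b ∧ 1 ≤ c + d := by
    rcases Nat.eq_zero_or_pos m with rfl | hm₀
    · exact ⟨1, 1, 0, n - 1, by omega⟩
    · exact ⟨2, 0, m - 1, n, by omega⟩
  have hbr := brM_ιW_mon_ιT_mon (F := F) a b c d
  rw [hm', hn', Nat.add_sub_cancel] at hbr
  refine mem_of_natCast_smul_mem 5 (n := m + 1) (by omega) (hbr ▸ brM_mem_commutator ?_ ?_)
  · exact ιW_mem_Mge (mk_zero_mem_weightGeW (mon_mem_weightGe (by omega)))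
  · exact ιT_mem_Mge (mk_zero_mem_weightGeW (mon_mem_weightGe (by omega)))

/-- The brackets `[x^a D₁, x^c D̃₁]` producing `x₁⁴x₂ⁿ D̃₁` all vanish. -/
theorem ιT_mon_four_mem_commutator [CharP F 5] {n : ℕ} (hn : n < 5) :
    ιT (mon 4 n, 0) ∈ commutator (Mge 1 : Submodule F (Mel F)) := by
  obtain ⟨k, j, hkj, hj⟩ : ∃ k j : ℕ, k + k + j = n + 1 ∧ ¬ 5 ∣ 2 * j := by
    rcases Nat.lt_or_ge n 4 with h | h
    · exact ⟨0, n + 1, by omega⟩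
    · exact ⟨1, 3, by omega⟩
  have hbr := brM_ιA_mon_ιA_mon (F := F) 2 k j
  rw [hkj, Nat.add_sub_cancel] at hbr
  refine mem_of_natCast_smul_mem 5 hj (hbr ▸ brM_mem_commutator ?_ ?_) <;>
    exact ιA_mem_Mge (mon_mem_weightGe (by omega))

theorem ιT_mon_mem_commutator [CharP F 5] {m n : ℕ} (hm : m < 5) (hn : n < 5) (h : 2 ≤ m + n) :
    ιT (mon m n, 0) ∈ commutator (Mge 1 : Submodule F (Mel F)) := by
  obtain hm₄ | rfl : m < 4 ∨ m = 4 := by omega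
  · exact ιT_mon_mem_commutator_of_lt_four hm₄ h
  · exact ιT_mon_four_mem_commutator hn

theorem ιT_wOf_mem_commutator [CharP F 5] {b : Idx} (i : Fin 2) (hb : 2 ≤ degA b) :
    ιT (wOf i b) ∈ commutator (Mge 1 : Submodule F (Mel F)) := by
  have hb' : 2 ≤ b.1.val + b.2.val := by unfold degA at hb; omega
  fin_cases i
  · simpa [wOf, X_eq_mon] using ιT_mon_mem_commutator (F := F) b.1.isLt b.2.isLt hb'
  · have hswap : swapM (ιT (mon b.2 b.1, 0)) = -(ιT (wOf 1 b) : Mel F) := by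
      simp [swapM_apply, ιT, swapA_mon, wOf, X_eq_mon]
    refine neg_mem_iff.1 (hswap ▸ swapM_mem_commutator (fun _ => swapM_mem_Mge) ?_)
    exact ιT_mon_mem_commutator b.2.isLt b.1.isLt (by omega)

theorem Mge_three_le_commutator [CharP F 5] :
    Mge 3 ≤ commutator (Mge 1 : Submodule F (Mel F)) :=
  Mge_le (fun _ hb => ιA_X_mem_commutator (by omega))
    (fun _ i hb => ιW_wOf_mem_commutator i (by omega))
    (fun _ i hb => ιT_wOf_mem_commutator i (by omega))

theorem ιT_euler_mem_commutator [CharP F 5] :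
    ιT (X (1, 0), X (0, 1)) ∈ commutator (Mge 1 : Submodule F (Mel F)) := by
  have hbr := brM_ιA_linear_ιA_linear (F := F) 0 1 1 0
  refine mem_of_natCast_smul_mem 5 (n := 2) (by norm_num) ?_
  have hc : (2 : F) * (1 * 1 - 0 * 0) = (2 : ℕ) := by norm_num
  rw [← hc, ← hbr]
  exact brM_mem_commutator (ιA_mem_Mge (linear_mem_weightGe 0 1))
    (ιA_mem_Mge (linear_mem_weightGe 1 0))

theorem commutator_Mge_one_le [CharP F 5] :
    commutator (Mge 1 : Submodule F (Mel F)) ≤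
      Mge 3 ⊔ Submodule.span F {ιT (X (1, 0), X (0, 1))} := by
  refine Submodule.span_le.2 ?_
  rintro _ ⟨x, hx, y, hy, rfl⟩
  obtain ⟨a, b, x', hx', rfl⟩ := exists_eq_linear_add_of_mem_Mge_one hx
  obtain ⟨c, d, y', hy', rfl⟩ := exists_eq_linear_add_of_mem_Mge_one hy
  have hl : ιA (a • mon 1 0 + b • mon 0 1) ∈ (Mge 1 : Submodule F (Mel F)) :=
    ιA_mem_Mge (linear_mem_weightGe a b)
  have hll := Submodule.smul_mem _ (2 * (b * c - a * d))
    (Submodule.mem_span_singleton_self (R := F) (ιT (X (1, 0), X (0, 1)) : Mel F))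
  have hly' := brM_mem_Mge hl hy'
  have hx'y := brM_mem_Mge hx' hy
  norm_num only at hly' hx'y
  rw [SetLike.mem_coe, brM_add_left, brM_add_right, brM_ιA_linear_ιA_linear]
  exact add_mem (add_mem (Submodule.mem_sup_right hll) (Submodule.mem_sup_left hly'))
    (Submodule.mem_sup_left hx'y)

/-- In the Melikian algebra over a field of characteristic 5,
`[M_{≥1}, M_{≥1}] = M_{≥3} + F·(x₁D̃₁ + x₂D̃₂)`. -/
theorem melikian_commutator_ge_one (F : Type*) [Field F] [CharP F 5] :
    Submodule.span F {m : Mel F | ∃ x ∈ (Mge 1 : Submodule F (Mel F)),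
        ∃ y ∈ (Mge 1 : Submodule F (Mel F)), m = brM x y} =
      (Mge 3 : Submodule F (Mel F)) ⊔ Submodule.span F {ιT (X (1, 0), X (0, 1))} :=
  le_antisymm commutator_Mge_one_le <| sup_le Mge_three_le_commutator <|
    (Submodule.span_singleton_le_iff_mem _ _).2 ιT_euler_mem_commutator

end Melikian
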